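/- Let F : ℝ^n ⇒ ℝ^p and G : ℝ^p ⇒ ℝ^q be nearly convex set-valued mappings with ri(rge F) ∩ ri(dom G) ≠ ∅. Then ri(gph(G ∘ F)) = {(x, z) ∈ ℝ^n × ℝ^q | x ∈ ri(dom F), z ∈ ri(rge G), and ri F(x) ∩ ri G⁻¹(z) ≠ ∅}, where (G ∘ F)(x) = ⋃_{y ∈ F(x)} G(y) and G⁻¹(z) = {y ∈ ℝ^p | z ∈ G(y)}. -/

import Mathlib

/-!
The relative interior of a nearly convex set commutes with affine images, with products, and with
affine preimages whenever the preimage of the relative interior is nonempty. All three rules come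
from two facts about segments: an open segment from a relative interior point to a point of the set
consists of relative interior points, and a segment ending at a relative interior point can be
prolonged within the set.

The graph of `G ∘ F` is the image under `(x, y, z) ↦ (x, z)` of the preimage of `gph F ×ˢ gph G`
under `(x, y, z) ↦ ((x, y), (y, z))`, and the qualification condition is what the preimage rule
needs. Hence `(x, z)` is a relative interior point iff `(x, y) ∈ ri (gph F)` and
`(y, z) ∈ ri (gph G)` for some `y`. Applied to a coordinate projection and to the inclusion of its
fibres, the image and preimage rules identify these two conditions with conditions on domains,
ranges and slices.
-/

open Set Metric

noncomputable section

/-- A set is *nearly convex* if it lies between a convex set and its closure. -/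
def NearlyConvex {E : Type*} [NormedAddCommGroup E] [NormedSpace ℝ E] (s : Set E) : Prop :=
  ∃ C : Set E, Convex ℝ C ∧ C ⊆ s ∧ s ⊆ closure C

/-- The *relative interior* of a set: points `a ∈ s` admitting `δ > 0` with
`B(a,δ) ∩ aff s ⊆ s`. -/
def ri {E : Type*} [NormedAddCommGroup E] [NormedSpace ℝ E] (s : Set E) : Set E :=
  {a | a ∈ s ∧ ∃ δ > 0, Metric.ball a δ ∩ (affineSpan ℝ s : Set E) ⊆ s}

/-- The graph of a set-valued mapping. -/
def gph {E P : Type*} (F : E → Set P) : Set (E × P) := {q | q.2 ∈ F q.1}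

/-- The domain of a set-valued mapping. -/
def domSV {E P : Type*} (F : E → Set P) : Set E := {x | (F x).Nonempty}

open Filter Topology AffineMap

section RelativeInterior

variable {E P : Type*} [NormedAddCommGroup E] [NormedSpace ℝ E]
  [NormedAddCommGroup P] [NormedSpace ℝ P] {s C : Set E} {a v w x : E}

lemma mem_ri_iff_mem_nhdsWithin : a ∈ ri s ↔ a ∈ s ∧ s ∈ 𝓝[affineSpan ℝ s] a := by
  rw [Metric.mem_nhdsWithin_iff]
  rfl

lemma ri_subset (s : Set E) : ri s ⊆ s := fun _ ha => ha.1

lemma ri_eq_intrinsicInterior (s : Set E) : ri s = intrinsicInterior ℝ s := by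
  ext a
  have hnhds (b : affineSpan ℝ s) : (↑) ⁻¹' s ∈ 𝓝 b ↔ s ∈ 𝓝[affineSpan ℝ s] (b : E) :=
    preimage_coe_mem_nhds_subtype
  simp only [mem_ri_iff_mem_nhdsWithin, mem_intrinsicInterior, mem_interior_iff_mem_nhds, hnhds]
  constructor
  · rintro ⟨has, hs⟩
    exact ⟨⟨a, subset_affineSpan ℝ s has⟩, hs, rfl⟩
  · rintro ⟨b, hb, rfl⟩
    exact ⟨mem_of_mem_nhdsWithin b.2 hb, hb⟩

lemma ri_prod (s : Set E) (t : Set P) : ri (s ×ˢ t) = ri s ×ˢ ri t := by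
  simp only [ri_eq_intrinsicInterior, intrinsicInterior_prod_eq]

lemma preimage_ri_subset_ri_preimage {f : E →ᵃ[ℝ] P} (hf : Continuous f) (t : Set P) :
    f ⁻¹' ri t ⊆ ri (f ⁻¹' t) := by
  intro a ha
  rw [mem_preimage, mem_ri_iff_mem_nhdsWithin] at ha
  have hspan : affineSpan ℝ (f ⁻¹' t) ≤ (affineSpan ℝ t).comap f :=
    affineSpan_le.2 (preimage_mono (f := f) (subset_affineSpan ℝ t))
  exact mem_ri_iff_mem_nhdsWithin.2
    ⟨ha.1, hf.continuousWithinAt.tendsto_nhdsWithin (fun _ hx => hspan hx) ha.2⟩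

lemma exists_mem_openSegment_of_mem_ri (ha : a ∈ ri s) (hx : x ∈ affineSpan ℝ s) :
    ∃ v ∈ s, a ∈ openSegment ℝ x v := by
  have hs := (mem_ri_iff_mem_nhdsWithin.1 ha).2
  have hline : Tendsto (lineMap x a : ℝ → E) (𝓝[>] 1) (𝓝[affineSpan ℝ s] a) := by
    refine tendsto_nhdsWithin_iff.2 ⟨?_, .of_forall fun t =>
      lineMap_mem t hx (subset_affineSpan ℝ s (ri_subset s ha))⟩
    have hcont : Continuous (lineMap x a : ℝ → E) := lineMap_continuous
    simpa only [lineMap_apply_one] using (hcont.tendsto 1).mono_left nhdsWithin_le_nhds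
  obtain ⟨t, hts, ht : 1 < t⟩ := ((hline.eventually_mem hs).and self_mem_nhdsWithin).exists
  refine ⟨lineMap x a t, hts, ?_⟩
  rw [openSegment_eq_image_lineMap]
  refine ⟨t⁻¹, ⟨by positivity, inv_lt_one_of_one_lt₀ ht⟩, ?_⟩
  rw [lineMap_lineMap_right, inv_mul_cancel₀ (by positivity), lineMap_apply_one]

lemma tendsto_lineMap_nhdsWithin_affineSubspace (A : AffineSubspace ℝ E) (v a : E) (r : ℝ) :
    Tendsto (fun p : E × E => lineMap p.1 p.2 r) (𝓝[A] v ×ˢ 𝓝[A] a) (𝓝[A] (lineMap v a r)) := by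
  have hcont : Continuous fun p : E × E => lineMap p.1 p.2 r := by
    simp only [lineMap_apply]
    fun_prop
  rw [← nhdsWithin_prod_eq]
  exact hcont.continuousWithinAt.tendsto_nhdsWithin fun _ hp => lineMap_mem r hp.1 hp.2

variable [FiniteDimensional ℝ E]

lemma closure_subset_affineSpan (s : Set E) : closure s ⊆ affineSpan ℝ s :=
  closure_minimal (subset_affineSpan ℝ s) (AffineSubspace.closed_of_finiteDimensional _)

lemma affineSpan_eq_of_subset_closure (hCs : C ⊆ s) (hsC : s ⊆ closure C) :
    affineSpan ℝ s = affineSpan ℝ C :=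
  le_antisymm (affineSpan_le.2 (hsC.trans (closure_subset_affineSpan C))) (affineSpan_mono ℝ hCs)

lemma openSegment_subset_ri_of_convex (hC : Convex ℝ C) (hw : w ∈ ri C) (hv : v ∈ closure C) :
    openSegment ℝ v w ⊆ ri C := by
  have hvspan := closure_subset_affineSpan C hv
  have hwspan := subset_affineSpan ℝ C (ri_subset C hw)
  rw [openSegment_eq_image_lineMap]
  rintro _ ⟨t, ⟨ht0, ht1⟩, rfl⟩
  set a := lineMap v w t with ha
  have haspan : a ∈ affineSpan ℝ C := lineMap_mem t hvspan hwspan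
  have hvw : lineMap v a t⁻¹ = w := by
    rw [ha, lineMap_lineMap_right, inv_mul_cancel₀ ht0.ne', lineMap_apply_one]
  -- Inverting `z = lineMap c w' t` for `c ∈ C` near `v` and `z` near `a` gives `w'` near `w`.
  have htendsto : Tendsto (fun p : E × E => lineMap p.1 p.2 t⁻¹)
      (𝓝[C] v ×ˢ 𝓝[affineSpan ℝ C] a) (𝓝[affineSpan ℝ C] w) := hvw ▸
    (tendsto_lineMap_nhdsWithin_affineSubspace (affineSpan ℝ C) v a t⁻¹).mono_left
      (prod_mono_left _ (nhdsWithin_mono v (subset_affineSpan ℝ C)))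
  have hw' := htendsto (mem_ri_iff_mem_nhdsWithin.1 hw).2
  have : (𝓝[C] v).NeBot := mem_closure_iff_nhdsWithin_neBot.1 hv
  obtain ⟨c, hw'c, hc⟩ := ((Eventually.curry hw').and self_mem_nhdsWithin).exists
  have haC : C ∈ 𝓝[affineSpan ℝ C] a := by
    filter_upwards [hw'c] with z hz
    have hzC := hC.lineMap_mem hc hz ⟨ht0.le, ht1.le⟩
    rwa [lineMap_lineMap_right, mul_inv_cancel₀ ht0.ne', lineMap_apply_one] at hzC
  exact mem_ri_iff_mem_nhdsWithin.2 ⟨mem_of_mem_nhdsWithin haspan haC, haC⟩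

lemma ri_nonempty_of_convex (hC : Convex ℝ C) (hne : C.Nonempty) : (ri C).Nonempty := by
  rw [ri_eq_intrinsicInterior]
  exact hne.intrinsicInterior hC

lemma ri_eq_ri_of_convex (hC : Convex ℝ C) (hCs : C ⊆ s) (hsC : s ⊆ closure C) :
    ri s = ri C := by
  refine Subset.antisymm (fun a ha => ?_) (fun a ha => ?_)
  · have hne : C.Nonempty := closure_nonempty_iff.1 ⟨a, hsC (ri_subset s ha)⟩
    obtain ⟨w, hw⟩ := ri_nonempty_of_convex hC hne
    obtain ⟨v, hv, hav⟩ :=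
      exists_mem_openSegment_of_mem_ri ha (subset_affineSpan ℝ s (hCs (ri_subset C hw)))
    rw [openSegment_symm] at hav
    exact openSegment_subset_ri_of_convex hC hw (hsC hv) hav
  · rw [mem_ri_iff_mem_nhdsWithin] at ha ⊢
    rw [affineSpan_eq_of_subset_closure hCs hsC]
    exact ⟨hCs ha.1, mem_of_superset ha.2 hCs⟩

end RelativeInterior

namespace NearlyConvex

variable {E P Q : Type*} [NormedAddCommGroup E] [NormedSpace ℝ E]
  [NormedAddCommGroup P] [NormedSpace ℝ P] [NormedAddCommGroup Q] [NormedSpace ℝ Q]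
  {s : Set E} {t : Set P} {v w : E}

protected lemma image (hs : NearlyConvex s) {f : E →ᵃ[ℝ] P} (hf : Continuous f) :
    NearlyConvex (f '' s) := by
  obtain ⟨C, hC, hCs, hsC⟩ := hs
  exact ⟨f '' C, hC.affine_image f, image_mono hCs,
    (image_mono hsC).trans (image_closure_subset_closure_image hf)⟩

protected lemma prod (hs : NearlyConvex s) (ht : NearlyConvex t) : NearlyConvex (s ×ˢ t) := by
  obtain ⟨C, hC, hCs, hsC⟩ := hs
  obtain ⟨D, hD, hDt, htD⟩ := ht
  exact ⟨C ×ˢ D, hC.prod hD, prod_mono hCs hDt, (prod_mono hsC htD).trans closure_prod_eq.superset⟩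

section FiniteDimensional

variable [FiniteDimensional ℝ E]

lemma ri_nonempty (hs : NearlyConvex s) (hne : s.Nonempty) : (ri s).Nonempty := by
  obtain ⟨C, hC, hCs, hsC⟩ := hs
  rw [ri_eq_ri_of_convex hC hCs hsC]
  exact ri_nonempty_of_convex hC (closure_nonempty_iff.1 (hne.mono hsC))

lemma openSegment_subset_ri (hs : NearlyConvex s) (hw : w ∈ ri s) (hv : v ∈ closure s) :
    openSegment ℝ w v ⊆ ri s := by
  obtain ⟨C, hC, hCs, hsC⟩ := hs
  rw [ri_eq_ri_of_convex hC hCs hsC] at hw ⊢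
  rw [openSegment_symm]
  exact openSegment_subset_ri_of_convex hC hw (closure_minimal hsC isClosed_closure hv)

end FiniteDimensional

lemma preimage [FiniteDimensional ℝ P] (ht : NearlyConvex t) {f : E →ᵃ[ℝ] P}
    (hne : (f ⁻¹' ri t).Nonempty) : NearlyConvex (f ⁻¹' t) := by
  obtain ⟨w, hw⟩ := hne
  obtain ⟨C, hC, hCt, htC⟩ := id ht
  refine ⟨f ⁻¹' C, hC.affine_preimage f, preimage_mono hCt, fun v hv => ?_⟩
  have hsub : openSegment ℝ w v ⊆ f ⁻¹' C := by
    rw [← image_subset_iff, image_openSegment]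
    refine (ht.openSegment_subset_ri hw (subset_closure hv)).trans ?_
    rw [ri_eq_ri_of_convex hC hCt htC]
    exact ri_subset C
  exact closure_mono hsub (segment_subset_closure_openSegment (right_mem_segment ℝ w v))

lemma ri_preimage [FiniteDimensional ℝ P] (ht : NearlyConvex t) {f : E →ᵃ[ℝ] P}
    (hf : Continuous f) (hne : (f ⁻¹' ri t).Nonempty) : ri (f ⁻¹' t) = f ⁻¹' ri t := by
  refine Subset.antisymm (fun a ha => ?_) (preimage_ri_subset_ri_preimage hf t)
  obtain ⟨w, hw⟩ := hne
  obtain ⟨v, hv, hav⟩ := exists_mem_openSegment_of_mem_ri ha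
    (subset_affineSpan ℝ (f ⁻¹' t) (ri_subset t hw))
  refine ht.openSegment_subset_ri hw (subset_closure hv) ?_
  rw [← image_openSegment]
  exact mem_image_of_mem f hav

variable [FiniteDimensional ℝ E] [FiniteDimensional ℝ P]

lemma ri_image (hs : NearlyConvex s) (f : E →ᵃ[ℝ] P) : ri (f '' s) = f '' ri s := by
  have hfs : NearlyConvex (f '' s) := hs.image f.continuous_of_finiteDimensional
  refine Subset.antisymm (fun a ha => ?_) (image_subset_iff.2 fun b hb => ?_)
  · obtain ⟨w, hw⟩ := hs.ri_nonempty (image_nonempty.1 ⟨a, ri_subset _ ha⟩)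
    obtain ⟨_, ⟨v, hv, rfl⟩, hav⟩ := exists_mem_openSegment_of_mem_ri ha
      (subset_affineSpan ℝ _ (mem_image_of_mem f (ri_subset s hw)))
    rw [← image_openSegment] at hav
    exact image_mono (hs.openSegment_subset_ri hw (subset_closure hv)) hav
  · obtain ⟨_, hw⟩ := hfs.ri_nonempty ⟨f b, mem_image_of_mem f (ri_subset s hb)⟩
    obtain ⟨w, hws, rfl⟩ := ri_subset _ hw
    obtain ⟨v, hv, hbv⟩ := exists_mem_openSegment_of_mem_ri hb (subset_affineSpan ℝ s hws)
    refine hfs.openSegment_subset_ri hw (subset_closure (mem_image_of_mem f hv)) ?_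
    rw [← image_openSegment]
    exact mem_image_of_mem f hbv

lemma mem_ri_iff_of_fiber_subset_range [FiniteDimensional ℝ Q] (hs : NearlyConvex s)
    (f : E →ᵃ[ℝ] P) (i : Q →ᵃ[ℝ] E) {z : Q} (hi : f ⁻¹' {f (i z)} ⊆ range i) :
    i z ∈ ri s ↔ f (i z) ∈ ri (f '' s) ∧ z ∈ ri (i ⁻¹' s) := by
  have hcont := i.continuous_of_finiteDimensional
  rw [hs.ri_image f]
  refine ⟨fun h => ⟨mem_image_of_mem f h, preimage_ri_subset_ri_preimage hcont s h⟩, ?_⟩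
  rintro ⟨⟨w, hw, hfw⟩, hz⟩
  obtain ⟨z', rfl⟩ := hi hfw
  rwa [hs.ri_preimage hcont ⟨z', hw⟩] at hz

end NearlyConvex

section SetValued

lemma domSV_eq_image_fst_gph {X Y : Type*} (F : X → Set Y) : domSV F = Prod.fst '' gph F := by
  ext x
  simp [domSV, gph, Set.Nonempty]

lemma iUnion_eq_image_snd_gph {X Y : Type*} (F : X → Set Y) : ⋃ x, F x = Prod.snd '' gph F := by
  ext y
  simp [gph]

lemma gph_comp_eq_image_preimage {X Y Z : Type*} (F : X → Set Y) (G : Y → Set Z) :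
    gph (fun x => ⋃ y ∈ F x, G y) = (fun r : X × Y × Z => (r.1, r.2.2)) ''
      ((fun r => ((r.1, r.2.1), r.2)) ⁻¹' (gph F ×ˢ gph G)) := by
  ext ⟨x, z⟩
  simp [gph]

variable {E P Q : Type*} [NormedAddCommGroup E] [NormedSpace ℝ E] [FiniteDimensional ℝ E]
  [NormedAddCommGroup P] [NormedSpace ℝ P] [FiniteDimensional ℝ P]
  [NormedAddCommGroup Q] [NormedSpace ℝ Q] [FiniteDimensional ℝ Q]
  {F : E → Set P} {G : P → Set Q} {x : E} {y : P} {z : Q}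

lemma mem_ri_gph_iff (hF : NearlyConvex (gph F)) :
    (x, y) ∈ ri (gph F) ↔ x ∈ ri (domSV F) ∧ y ∈ ri (F x) := by
  rw [domSV_eq_image_fst_gph]
  exact hF.mem_ri_iff_of_fiber_subset_range AffineMap.fst ((const ℝ P x).prod (.id ℝ P))
    fun w hw => ⟨w.2, Prod.ext hw.symm rfl⟩

lemma mem_ri_gph_iff_range (hF : NearlyConvex (gph F)) :
    (x, y) ∈ ri (gph F) ↔ y ∈ ri (⋃ x, F x) ∧ x ∈ ri {x | y ∈ F x} := by
  rw [iUnion_eq_image_snd_gph]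
  exact hF.mem_ri_iff_of_fiber_subset_range AffineMap.snd ((AffineMap.id ℝ E).prod (const ℝ E y))
    fun w hw => ⟨w.1, Prod.ext rfl hw.symm⟩

lemma exists_mem_ri_gph_of_mem_ri_domSV (hF : NearlyConvex (gph F)) (hx : x ∈ ri (domSV F)) :
    ∃ y, (x, y) ∈ ri (gph F) := by
  rw [domSV_eq_image_fst_gph] at hx
  obtain ⟨⟨_, y⟩, hxy, rfl⟩ := (hF.ri_image AffineMap.fst).subset hx
  exact ⟨y, hxy⟩

lemma exists_mem_ri_gph_of_mem_ri_iUnion (hF : NearlyConvex (gph F)) (hy : y ∈ ri (⋃ x, F x)) :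
    ∃ x, (x, y) ∈ ri (gph F) := by
  rw [iUnion_eq_image_snd_gph] at hy
  obtain ⟨⟨x, _⟩, hxy, rfl⟩ := (hF.ri_image AffineMap.snd).subset hy
  exact ⟨x, hxy⟩

lemma mem_ri_gph_comp_iff (hF : NearlyConvex (gph F)) (hG : NearlyConvex (gph G))
    (hqc : (ri (⋃ x, F x) ∩ ri (domSV G)).Nonempty) :
    (x, z) ∈ ri (gph (fun x => ⋃ y ∈ F x, G y)) ↔
      ∃ y, (x, y) ∈ ri (gph F) ∧ (y, z) ∈ ri (gph G) := by
  let diag : E × P × Q →ᵃ[ℝ] (E × P) × (P × Q) :=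
    ((AffineMap.id ℝ E).prodMap AffineMap.fst).prod AffineMap.snd
  let proj : E × P × Q →ᵃ[ℝ] E × Q := (AffineMap.id ℝ E).prodMap AffineMap.snd
  have hdiag : Continuous diag := diag.continuous_of_finiteDimensional
  have hFG : NearlyConvex (gph F ×ˢ gph G) := hF.prod hG
  have hne : (diag ⁻¹' ri (gph F ×ˢ gph G)).Nonempty := by
    obtain ⟨y₀, hyF, hyG⟩ := hqc
    obtain ⟨x₀, hxy⟩ := exists_mem_ri_gph_of_mem_ri_iUnion hF hyF
    obtain ⟨z₀, hyz⟩ := exists_mem_ri_gph_of_mem_ri_domSV hG hyG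
    exact ⟨(x₀, y₀, z₀), (ri_prod _ _).superset ⟨hxy, hyz⟩⟩
  have hri : ri (gph (fun x => ⋃ y ∈ F x, G y)) =
      proj '' (diag ⁻¹' (ri (gph F) ×ˢ ri (gph G))) := calc
    _ = ri (proj '' (diag ⁻¹' (gph F ×ˢ gph G))) := by
      rw [gph_comp_eq_image_preimage]; rfl
    _ = proj '' ri (diag ⁻¹' (gph F ×ˢ gph G)) := (hFG.preimage hne).ri_image proj
    _ = proj '' (diag ⁻¹' (ri (gph F) ×ˢ ri (gph G))) := by
      rw [hFG.ri_preimage hdiag hne, ri_prod]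
  rw [hri]
  constructor
  · rintro ⟨⟨x, y, z⟩, ⟨hxy, hyz⟩, hxz⟩
    obtain ⟨rfl, rfl⟩ := Prod.mk.inj hxz
    exact ⟨y, hxy, hyz⟩
  · rintro ⟨y, hxy, hyz⟩
    exact ⟨(x, y, z), ⟨hxy, hyz⟩, rfl⟩

theorem ri_gph_comp_general (hF : NearlyConvex (gph F)) (hG : NearlyConvex (gph G))
    (hqc : (ri (⋃ x, F x) ∩ ri (domSV G)).Nonempty) :
    ri (gph (fun x => ⋃ y ∈ F x, G y)) =
      {r : E × Q | r.1 ∈ ri (domSV F) ∧ r.2 ∈ ri (⋃ y, G y) ∧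
        (ri (F r.1) ∩ ri {y | r.2 ∈ G y}).Nonempty} := by
  ext ⟨x, z⟩
  calc
    _ ↔ ∃ y, (x, y) ∈ ri (gph F) ∧ (y, z) ∈ ri (gph G) := mem_ri_gph_comp_iff hF hG hqc
    _ ↔ ∃ y, (x ∈ ri (domSV F) ∧ y ∈ ri (F x)) ∧
          (z ∈ ri (⋃ y, G y) ∧ y ∈ ri {y | z ∈ G y}) := by
      simp only [mem_ri_gph_iff hF, mem_ri_gph_iff_range hG]
    _ ↔ x ∈ ri (domSV F) ∧ z ∈ ri (⋃ y, G y) ∧ (ri (F x) ∩ ri {y | z ∈ G y}).Nonempty := by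
      rw [exists_congr fun y => and_and_and_comm, exists_and_left, and_assoc]
      rfl

end SetValued

theorem ri_gph_comp (n p q : ℕ)
    (F : EuclideanSpace ℝ (Fin n) → Set (EuclideanSpace ℝ (Fin p)))
    (G : EuclideanSpace ℝ (Fin p) → Set (EuclideanSpace ℝ (Fin q)))
    (hF : NearlyConvex (gph F)) (hG : NearlyConvex (gph G))
    (hqc : (ri (⋃ x, F x) ∩ ri (domSV G)).Nonempty) :
    ri (gph (fun x => ⋃ y ∈ F x, G y)) =
      {r : EuclideanSpace ℝ (Fin n) × EuclideanSpace ℝ (Fin q) |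
        r.1 ∈ ri (domSV F) ∧ r.2 ∈ ri (⋃ y, G y) ∧
          (ri (F r.1) ∩ ri {y | r.2 ∈ G y}).Nonempty} :=
  ri_gph_comp_general hF hG hqc
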